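/- arXiv:1604.02486 — 2 statements merged into one kernel-verified Lean document; each statement's English description precedes it below -/
import Mathlib

section
/- Let x be a feasible solution of the subtour elimination LP for s–t path TSP, and let U_1, U_2 ⊆ V with s ∈ U_1, U_1 ⊊ U_2, and t ∉ U_2. Then x(δ(U_1) ∩ δ(U_2)) ≤ (1/2)·(x(δ(U_1)) + x(δ(U_2))) − 1. -/
/-!
Put `W = U₂ \ U₁`. It is nonempty and contains neither `s` nor `t`, so the LP gives
`x(δ(W)) ≥ 2`. Since `U₁ ⊆ U₂`, every edge of `δ(W)` lies in exactly one of `δ(U₁)`, `δ(U₂)`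
(`cutEdges_sdiff_subset`), so by nonnegativity of `x`,
`2 ≤ x(δ(W)) ≤ x(δ(U₁)) + x(δ(U₂)) - 2 x(δ(U₁) ∩ δ(U₂))`.
-/

open Finset

noncomputable section
open scoped Classical

/-- `δ(U)`: the set of edges (unordered pairs of distinct vertices) with exactly one
endpoint in `U`. -/
def cutEdges {V : Type*} [Fintype V] (U : Finset V) : Finset (Sym2 V) :=
  Finset.univ.filter fun e => ∃ u v : V, e = s(u, v) ∧ u ∈ U ∧ v ∉ U

/-- `f(U) = 1` if `|U ∩ {s,t}| = 1` and `f(U) = 2` otherwise. -/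
def lpBound {V : Type*} [Fintype V] (s t : V) (U : Finset V) : ℝ :=
  if (U ∩ {s, t}).card = 1 then 1 else 2

/-- `x` is a feasible solution of the subtour elimination LP for `s`–`t` path TSP. -/
def SubtourLP {V : Type*} [Fintype V] (s t : V) (x : Sym2 V → ℝ) : Prop :=
  (∀ e : Sym2 V, 0 ≤ x e) ∧
  (∀ v : V, ∑ e ∈ cutEdges {v}, x e = lpBound s t {v}) ∧
  (∀ U : Finset V, U.Nonempty → U ≠ Finset.univ → lpBound s t U ≤ ∑ e ∈ cutEdges U, x e)


theorem mem_cutEdges_mk {V : Type*} [Fintype V] (U : Finset V) (a b : V) :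
    s(a, b) ∈ cutEdges U ↔ (a ∈ U ∧ b ∉ U) ∨ (b ∈ U ∧ a ∉ U) := by
  simp only [cutEdges, Finset.mem_filter, Finset.mem_univ, true_and, Sym2.eq_iff]
  constructor
  · rintro ⟨u, v, ⟨rfl, rfl⟩ | ⟨rfl, rfl⟩, hu, hv⟩
    · exact Or.inl ⟨hu, hv⟩
    · exact Or.inr ⟨hu, hv⟩
  · rintro (⟨ha, hb⟩ | ⟨hb, ha⟩)
    · exact ⟨a, b, Or.inl ⟨rfl, rfl⟩, ha, hb⟩
    · exact ⟨b, a, Or.inr ⟨rfl, rfl⟩, hb, ha⟩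

theorem cutEdges_sdiff_subset {V : Type*} [Fintype V] {U₁ U₂ : Finset V} (h : U₁ ⊆ U₂) :
    cutEdges (U₂ \ U₁) ⊆
      (cutEdges U₁ \ cutEdges U₂) ∪ (cutEdges U₂ \ cutEdges U₁) := by
  intro e
  induction e using Sym2.ind with
  | _ a b =>
    have ha := @h a
    have hb := @h b
    simp only [Finset.mem_union, Finset.mem_sdiff, mem_cutEdges_mk]
    tauto

/-- For nested `s`–`t` cuts, `x(δ(U₁) ∩ δ(U₂)) ≤ (x(δ(U₁)) + x(δ(U₂)))/2 − 1`. -/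
theorem nested_cuts_common_edges {V : Type*} [Fintype V] (s t : V) (hst : s ≠ t)
    (x : Sym2 V → ℝ) (hx : SubtourLP s t x)
    (U₁ U₂ : Finset V) (hs1 : s ∈ U₁) (h12 : U₁ ⊂ U₂) (ht2 : t ∉ U₂) :
    ∑ e ∈ cutEdges U₁ ∩ cutEdges U₂, x e ≤
      (1 / 2) * ((∑ e ∈ cutEdges U₁, x e) + ∑ e ∈ cutEdges U₂, x e) - 1 := by
  obtain ⟨hnn, -, hcut⟩ := hx
  have hne : (U₂ \ U₁).Nonempty := Finset.sdiff_nonempty.2 h12.2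
  have htW : t ∉ U₂ \ U₁ := fun h => ht2 (Finset.mem_sdiff.1 h).1
  have hsW : s ∉ U₂ \ U₁ := fun h => (Finset.mem_sdiff.1 h).2 hs1
  have hW := hcut (U₂ \ U₁) hne fun h => htW (h ▸ Finset.mem_univ t)
  have hempty : (U₂ \ U₁) ∩ {s, t} = ∅ := by
    ext v
    simp only [Finset.mem_inter, Finset.mem_insert, Finset.mem_singleton, Finset.notMem_empty,
      iff_false]
    rintro ⟨hv, rfl | rfl⟩
    · exact hsW hv
    · exact htW hv
  have hbound : lpBound s t (U₂ \ U₁) = 2 := by simp [lpBound, hempty]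
  have hle := Finset.sum_le_sum_of_subset_of_nonneg (f := x) (cutEdges_sdiff_subset h12.1)
    fun e _ _ => hnn e
  have hdisj : Disjoint (cutEdges U₁ \ cutEdges U₂) (cutEdges U₂ \ cutEdges U₁) :=
    disjoint_sdiff_sdiff
  rw [Finset.sum_union hdisj] at hle
  have h1 := Finset.sum_inter_add_sum_sdiff (cutEdges U₁) (cutEdges U₂) x
  have h2 := Finset.sum_inter_add_sum_sdiff (cutEdges U₂) (cutEdges U₁) x
  rw [Finset.inter_comm] at h2
  linarith
end
end

section
/- Let x be a feasible solution of the subtour elimination LP for s–t path TSP, and fix a layered convex combination of x into spanning trees with lonely-edge assignment L. Let S ∈ 𝒮 and let Q be a narrow cut with Q ∉ 𝒬(S). Then x^Q(e) = 0 for every edge e ∈ B(S); in particular ∑_{e ∈ B(S)} x^Q(e) = 0. -/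
/-!
Suppose `x^Q(e) > 0` for some `e ∈ B(S)`, witnessed by a tree `S'` in which `e` is the lonely
edge of `Q`, and let `Q₁ ≠ Q₂` be lonely cuts of `S` containing `e`. Since `Q` is not lonely
in `S`, layeredness applied to `S` gives `x(Qᵢ) < x(Q)`, and layeredness applied to `S'` then
makes `Q₁` and `Q₂` lonely cuts of `S'`. Both contain `e ∈ S'`, so both meet `S'` exactly
in `e`. But a cut is determined by its intersection with a connected spanning edge set
(`cutEdges_eq_of_inter_eq`), so `Q₁ = Q₂`, a contradiction.
-/

open Finset

noncomputable section
open scoped Classical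

/-- `Q` is a narrow cut: an `s`–`t` cut of `x`-value less than `2`. -/
def IsNarrowCut {V : Type*} [Fintype V] (s t : V) (x : Sym2 V → ℝ)
    (Q : Finset (Sym2 V)) : Prop :=
  ∃ U : Finset V, (U ∩ {s, t}).card = 1 ∧ Q = cutEdges U ∧ ∑ e ∈ Q, x e < 2

/-- `(𝒮, lam)` expresses `x` as a convex combination of (edge sets of) spanning trees of
the support graph of `x`. -/
def IsTreeConvexComb {V : Type*} [Fintype V] (x : Sym2 V → ℝ)
    (𝒮 : Finset (Finset (Sym2 V))) (lam : Finset (Sym2 V) → ℝ) : Prop :=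
  (∀ S ∈ 𝒮, (SimpleGraph.fromEdgeSet (S : Set (Sym2 V))).IsTree ∧
      ∀ e ∈ S, ¬ e.IsDiag ∧ 0 < x e) ∧
  (∀ S ∈ 𝒮, 0 < lam S) ∧
  (∑ S ∈ 𝒮, lam S = 1) ∧
  (∀ e : Sym2 V, ¬ e.IsDiag → ∑ S ∈ 𝒮.filter (fun S => e ∈ S), lam S = x e)

/-- `L` is a lonely-edge assignment: each tree `S` gets a set `L S ⊆ S` of edges, each of
which is the unique edge of `S` in some narrow cut. -/
def IsLonelyAssignment {V : Type*} [Fintype V] (s t : V) (x : Sym2 V → ℝ)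
    (𝒮 : Finset (Finset (Sym2 V))) (L : Finset (Sym2 V) → Finset (Sym2 V)) : Prop :=
  ∀ S ∈ 𝒮, L S ⊆ S ∧ ∀ e ∈ L S, ∃ Q, IsNarrowCut s t x Q ∧ Q ∩ S = {e}

/-- `Q` is a lonely cut of the tree `S` (w.r.t. the lonely-edge assignment `L`). -/
def IsLonelyCut {V : Type*} [Fintype V] (s t : V) (x : Sym2 V → ℝ)
    (L : Finset (Sym2 V) → Finset (Sym2 V)) (S Q : Finset (Sym2 V)) : Prop :=
  IsNarrowCut s t x Q ∧ ∃ e ∈ L S, Q ∩ S = {e}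

/-- The vector `x^Q`: `x^Q(e)` is the total coefficient of the trees in which `e` is the
lonely edge of the narrow cut `Q`. -/
def xQvec {V : Type*} [Fintype V] (𝒮 : Finset (Finset (Sym2 V)))
    (lam : Finset (Sym2 V) → ℝ) (L : Finset (Sym2 V) → Finset (Sym2 V))
    (Q : Finset (Sym2 V)) (e : Sym2 V) : ℝ :=
  ∑ S ∈ 𝒮.filter (fun S => e ∈ L S ∧ Q ∩ S = {e}), lam S

/-- The convex combination `(𝒮, lam)` with lonely-edge assignment `L` is layered. -/
def IsLayered {V : Type*} [Fintype V] (s t : V) (x : Sym2 V → ℝ)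
    (𝒮 : Finset (Finset (Sym2 V))) (lam : Finset (Sym2 V) → ℝ)
    (L : Finset (Sym2 V) → Finset (Sym2 V)) : Prop :=
  IsTreeConvexComb x 𝒮 lam ∧ IsLonelyAssignment s t x 𝒮 L ∧
  (∀ Q, IsNarrowCut s t x Q →
    ∑ e ∈ Q, xQvec 𝒮 lam L Q e = 2 - ∑ e ∈ Q, x e) ∧
  (∀ S ∈ 𝒮, ∀ Q Q' : Finset (Sym2 V), IsLonelyCut s t x L S Q →
    IsNarrowCut s t x Q' → (∑ e ∈ Q', x e) ≤ ∑ e ∈ Q, x e → IsLonelyCut s t x L S Q')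

/-- `B(S)`: the set of edges contained in at least two lonely cuts of `S`. -/
def badSet {V : Type*} [Fintype V] (s t : V) (x : Sym2 V → ℝ)
    (L : Finset (Sym2 V) → Finset (Sym2 V)) (S : Finset (Sym2 V)) : Finset (Sym2 V) :=
  Finset.univ.filter fun e => ∃ Q₁ Q₂ : Finset (Sym2 V), Q₁ ≠ Q₂ ∧
    IsLonelyCut s t x L S Q₁ ∧ IsLonelyCut s t x L S Q₂ ∧ e ∈ Q₁ ∧ e ∈ Q₂

theorem mk_mem_cutEdges {V : Type*} [Fintype V] (U : Finset V) (a b : V) :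
    s(a, b) ∈ cutEdges U ↔ ¬ (a ∈ U ↔ b ∈ U) := by
  simp only [cutEdges, Finset.mem_filter, Finset.mem_univ, true_and]
  constructor
  · rintro ⟨u, v, h, hu, hv⟩
    rcases Sym2.eq_iff.1 h with ⟨rfl, rfl⟩ | ⟨rfl, rfl⟩ <;> tauto
  · intro h
    by_cases ha : a ∈ U
    · exact ⟨a, b, rfl, ha, by tauto⟩
    · exact ⟨b, a, Sym2.eq_swap, by tauto, ha⟩

/-- Two cuts meeting a connected spanning edge set `S` in the same edges are equal: membership
in the symmetric difference of the two shores is constant along the edges of `S`, so the shores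
are equal or complementary. -/
theorem cutEdges_eq_of_inter_eq {V : Type*} [Fintype V] (S : Finset (Sym2 V))
    (hS : (SimpleGraph.fromEdgeSet (S : Set (Sym2 V))).Connected) (U W : Finset V)
    (h : cutEdges U ∩ S = cutEdges W ∩ S) : cutEdges U = cutEdges W := by
  have key : ∀ a b : V, ((a ∈ U ↔ a ∈ W) ↔ (b ∈ U ↔ b ∈ W)) := by
    intro a b
    obtain ⟨p⟩ := hS.preconnected a b
    induction p with
    | nil => rfl
    | @cons u v w hadj _ ih =>
      rw [← ih]
      have hmem : s(u, v) ∈ S := by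
        simpa using ((SimpleGraph.fromEdgeSet_adj _).1 hadj).1
      have h1 : s(u, v) ∈ cutEdges U ∩ S ↔ s(u, v) ∈ cutEdges W ∩ S := by rw [h]
      simp only [Finset.mem_inter, hmem, and_true, mk_mem_cutEdges] at h1
      tauto
  ext e
  induction e with
  | _ a b =>
    rw [mk_mem_cutEdges, mk_mem_cutEdges]
    have := key a b
    tauto

/-- In a layered convex combination, the parity-completion vector `x^Q` of a narrow cut
`Q` that is not lonely in `S` vanishes on the bad edges `B(S)`. -/
theorem xQ_vanishes_on_badSet {V : Type*} [Fintype V] (s t : V) (hst : s ≠ t)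
    (x : Sym2 V → ℝ) (hx : SubtourLP s t x)
    (𝒮 : Finset (Finset (Sym2 V))) (lam : Finset (Sym2 V) → ℝ)
    (L : Finset (Sym2 V) → Finset (Sym2 V))
    (hlay : IsLayered s t x 𝒮 lam L)
    (S : Finset (Sym2 V)) (hS : S ∈ 𝒮)
    (Q : Finset (Sym2 V)) (hQ : IsNarrowCut s t x Q)
    (hQnotlonely : ¬ IsLonelyCut s t x L S Q) :
    (∀ e ∈ badSet s t x L S, xQvec 𝒮 lam L Q e = 0) ∧
      ∑ e ∈ badSet s t x L S, xQvec 𝒮 lam L Q e = 0 := by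
  obtain ⟨⟨htree, -, -, -⟩, -, -, hlayer⟩ := hlay
  have hzero : ∀ e ∈ badSet s t x L S, xQvec 𝒮 lam L Q e = 0 := by
    intro e he
    obtain ⟨Q₁, Q₂, hne, h₁, h₂, he₁, he₂⟩ := (Finset.mem_filter.1 he).2
    unfold xQvec
    rw [Finset.filter_eq_empty_iff.2, Finset.sum_empty]
    rintro S' hS' ⟨heL, hQS'⟩
    have heS' : e ∈ S' :=
      (Finset.mem_inter.1 (hQS' ▸ Finset.mem_singleton_self e : e ∈ Q ∩ S')).2
    -- A lonely cut of `S` is lighter than `Q`, hence also lonely in `S'`.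
    have hmeet : ∀ R, IsLonelyCut s t x L S R → e ∈ R → R ∩ S' = {e} := by
      intro R hR heR
      have hlt : ∑ e ∈ R, x e < ∑ e ∈ Q, x e := by
        by_contra hle
        exact hQnotlonely (hlayer S hS R Q hR hQ (not_lt.1 hle))
      obtain ⟨-, g, -, hg⟩ := hlayer S' hS' Q R ⟨hQ, e, heL, hQS'⟩ hR.1 hlt.le
      have heg : e ∈ R ∩ S' := Finset.mem_inter.2 ⟨heR, heS'⟩
      rw [hg, Finset.mem_singleton] at heg
      rw [hg, heg]
    have hm₁ := hmeet Q₁ h₁ he₁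
    have hm₂ := hmeet Q₂ h₂ he₂
    obtain ⟨⟨U₁, -, rfl, -⟩, -⟩ := h₁
    obtain ⟨⟨U₂, -, rfl, -⟩, -⟩ := h₂
    exact hne (cutEdges_eq_of_inter_eq S' (htree S' hS').1.connected U₁ U₂ (hm₁.trans hm₂.symm))
  exact ⟨hzero, Finset.sum_eq_zero hzero⟩
end
end
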